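/- arXiv:math/9801076 — 2 statements merged into one kernel-verified Lean document; each statement's English description precedes it below -/
import Mathlib

section
/- Let A be an integral domain over ℂ, I = (f, b₁, …, b_s) an ideal of A with f not a zero divisor, and suppose f = f₁ f₂ with f₁, f₂ ∈ I-related elements such that f₁f₂ ∈ I. Set A₁ = A[I₁/f₁] ⊆ Frac A where I₁ = (I, f₁), and let I₂ be the ideal of A₁ generated by I/f₁. Then A[I/f] = A₁[I₂/f₂] as subrings of Frac A. -/
theorem stmt_2_aux {A K : Type*} [CommRing A] [IsDomain A] [Field K] [Algebra A K] [IsFractionRing A K]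
    (I : Ideal A) (f f₁ f₂ : A) (hf : f = f₁ * f₂) (hfI : f ∈ I) (hf0 : f ≠ 0) :
    let ι : A → K := algebraMap A K
    let I₁ : Ideal A := I ⊔ Ideal.span {f₁}
    let A₁ : Subalgebra A K := Algebra.adjoin A ((fun a => ι a / ι f₁) '' (I₁ : Set A))
    let I₂ : Ideal A₁ :=
      Ideal.span {b : A₁ | ∃ a ∈ I, (b : K) = ι a / ι f₁}
    ((Algebra.adjoin A ((fun a => ι a / ι f) '' (I : Set A)) : Subalgebra A K) : Set K) =
      ((Algebra.adjoin A₁ ((fun b : A₁ => (b : K) / ι f₂) '' (I₂ : Set A₁)) :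
        Subalgebra A₁ K) : Set K) := by
  intro ι I₁ A₁ I₂
  have h0 : ι f₁ * ι f₂ ≠ 0 := by
    have h : ι f ≠ 0 := by
      simpa [ι] using hf0
    rw [hf] at h
    simpa [ι] using h
  have h1 : ι f₁ ≠ 0 := left_ne_zero_of_mul h0
  have h2 : ι f₂ ≠ 0 := right_ne_zero_of_mul h0
  have hff : ι f = ι f₁ * ι f₂ := by rw [hf]; exact map_mul (algebraMap A K) _ _
  set B : Subalgebra A K := Algebra.adjoin A ((fun a => ι a / ι f) '' (I : Set A)) with hB
  have hBm : ∀ a ∈ I, ι a / ι f ∈ B := fun a ha => Algebra.subset_adjoin ⟨a, ha, rfl⟩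
  have hA₁ : A₁ ≤ B := by
    refine Algebra.adjoin_le ?_
    rintro _ ⟨a, ha, rfl⟩
    obtain ⟨b, hb, c, hc, rfl⟩ := Submodule.mem_sup.1 ha
    obtain ⟨d, rfl⟩ := Ideal.mem_span_singleton'.1 hc
    have e : ι (b + d * f₁) / ι f₁ = ι (b * f₂) / ι f + ι d := by
      have e1 : ι (b + d * f₁) = ι b + ι d * ι f₁ := by simp [ι]
      have e2 : ι (b * f₂) = ι b * ι f₂ := by simp [ι]
      rw [e1, e2, hff]
      rw [add_div, mul_div_cancel_right₀ _ h1, mul_div_mul_right _ _ h2]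
    change ι (b + d * f₁) / ι f₁ ∈ B
    rw [e]
    exact B.add_mem (hBm _ (I.mul_mem_right _ hb)) (B.algebraMap_mem d)
  have hI₂ : ∀ b ∈ I₂, (b : K) / ι f₂ ∈ B := by
    intro b hb
    refine Submodule.span_induction (p := fun (b : A₁) _ => (b : K) / ι f₂ ∈ B)
      ?_ ?_ ?_ ?_ hb
    · rintro x ⟨a, ha, hx⟩
      rw [hx, div_div, ← hff]
      exact hBm a ha
    · simp
    · intro x y _ _ hx hy
      have e : ((x + y : A₁) : K) / ι f₂ = (x : K) / ι f₂ + (y : K) / ι f₂ := by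
        rw [← add_div]; rfl
      rw [e]
      exact B.add_mem hx hy
    · intro r x _ hx
      have e : ((r • x : A₁) : K) / ι f₂ = (r : K) * ((x : K) / ι f₂) := by
        rw [← mul_div_assoc]; rfl
      rw [e]
      exact B.mul_mem (hA₁ r.2) hx
  apply Set.Subset.antisymm
  · have : B ≤ (Algebra.adjoin A₁ ((fun b : A₁ => (b : K) / ι f₂) '' (I₂ : Set A₁)) :
        Subalgebra A₁ K).restrictScalars A := by
      refine Algebra.adjoin_le ?_
      rintro _ ⟨a, ha, rfl⟩
      have hm : ι a / ι f₁ ∈ A₁ :=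
        Algebra.subset_adjoin ⟨a, Ideal.mem_sup_left ha, rfl⟩
      have hm2 : (⟨ι a / ι f₁, hm⟩ : A₁) ∈ I₂ := Ideal.subset_span ⟨a, ha, rfl⟩
      have e : ι a / ι f = ι a / ι f₁ / ι f₂ := by rw [div_div, hff]
      have hm3 : ι a / ι f₁ / ι f₂ ∈
          Algebra.adjoin A₁ ((fun b : A₁ => (b : K) / ι f₂) '' (I₂ : Set A₁)) :=
        Algebra.subset_adjoin (Set.mem_image_of_mem _ hm2)
      rw [← e] at hm3
      exact hm3
    exact this
  · intro x hx
    refine Algebra.adjoin_induction (p := fun x _ => x ∈ B) ?_ ?_ ?_ ?_ hx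
    · rintro _ ⟨b, hb, rfl⟩
      exact hI₂ b hb
    · intro r
      exact hA₁ r.2
    · intro x y _ _ hx hy
      exact B.add_mem hx hy
    · intro x y _ _ hx hy
      exact B.mul_mem hx hy

/-- Decomposition of an affine modification: if `f = f₁ f₂ ∈ I`, setting
`A₁ = A[I₁/f₁]` with `I₁ = (I, f₁)` and `I₂ ⊆ A₁` the ideal generated by `I/f₁`,
one has `A[I/f] = A₁[I₂/f₂]` as subrings of `Frac A`. -/
theorem stmt_2 {A : Type*} [CommRing A] [IsDomain A] [Algebra ℂ A]
    (I : Ideal A) (f f₁ f₂ : A) (hf : f = f₁ * f₂) (hfI : f ∈ I) (hf0 : f ≠ 0) :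
    letI K := FractionRing A
    letI ι : A → K := algebraMap A K
    letI I₁ : Ideal A := I ⊔ Ideal.span {f₁}
    letI A₁ : Subalgebra A K := Algebra.adjoin A ((fun a => ι a / ι f₁) '' (I₁ : Set A))
    letI I₂ : Ideal A₁ :=
      Ideal.span {b : A₁ | ∃ a ∈ I, (b : K) = ι a / ι f₁}
    ((Algebra.adjoin A ((fun a => ι a / ι f) '' (I : Set A)) : Subalgebra A K) : Set K) =
      ((Algebra.adjoin A₁ ((fun b : A₁ => (b : K) / ι f₂) '' (I₂ : Set A₁)) :
        Subalgebra A₁ K) : Set K) := by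
  exact stmt_2_aux (K := FractionRing A) I f f₁ f₂ hf hfI hf0
end

section
/- Let A be an affine domain over ℂ, I ⊆ A an ideal, f ∈ I nonzero, and φ an automorphism of A with φ(I) = I and φ(f) = α f for an invertible α ∈ A. Then φ extends uniquely to an automorphism φ' of A' = A[I/f]. -/
theorem aux_mem {A : Type*} [CommRing A] [IsDomain A]
    (I : Ideal A) (f : A) (hf0 : f ≠ 0)
    (φ : A ≃+* A) (hφI : ∀ a ∈ I, φ a ∈ I)
    (α : A) (hα : IsUnit α) (hφf : φ f = α * f)
    (Φ : FractionRing A ≃+* FractionRing A)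
    (hΦ : ∀ a, Φ (algebraMap A _ a) = algebraMap A _ (φ a))
    (x : FractionRing A)
    (hx : x ∈ Algebra.adjoin A ((fun a => algebraMap A (FractionRing A) a /
      algebraMap A (FractionRing A) f) '' (I : Set A))) :
    Φ x ∈ Algebra.adjoin A ((fun a => algebraMap A (FractionRing A) a /
      algebraMap A (FractionRing A) f) '' (I : Set A)) := by
  induction hx using Algebra.adjoin_induction with
  | mem x hx =>
    obtain ⟨a, ha, rfl⟩ := hx
    obtain ⟨β, hβ⟩ := hα.exists_left_inv
    apply Algebra.subset_adjoin
    refine ⟨β * φ a, I.mul_mem_left _ (hφI a ha), ?_⟩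
    have hf : algebraMap A (FractionRing A) f ≠ 0 := by
      simpa using hf0
    have hα0 : algebraMap A (FractionRing A) α ≠ 0 := by
      simpa using hα.ne_zero
    have hβ' : algebraMap A (FractionRing A) β * algebraMap A (FractionRing A) α = 1 := by
      rw [← map_mul, hβ, map_one]
    simp only [map_div₀, hΦ, hφf, map_mul]
    rw [div_eq_div_iff hf (mul_ne_zero hα0 hf)]
    linear_combination (algebraMap A (FractionRing A) (φ a) * algebraMap A (FractionRing A) f) * hβ'
  | algebraMap a =>
    rw [hΦ]
    exact Subalgebra.algebraMap_mem _ _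
  | add x y _ _ hx hy => rw [map_add]; exact add_mem hx hy
  | mul x y _ _ hx hy => rw [map_mul]; exact mul_mem hx hy

/-- Lifting automorphisms to an affine modification: an automorphism `φ` of `A` with
`φ(I) = I` and `φ(f) = α f`, `α` invertible, extends uniquely to an automorphism of
`A' = A[I/f]`. -/
theorem stmt_8 {A : Type*} [CommRing A] [IsDomain A] [Algebra ℂ A]
    (hA : Algebra.FiniteType ℂ A)
    (I : Ideal A) (f : A) (hfI : f ∈ I) (hf0 : f ≠ 0)
    (φ : A ≃+* A) (hφI : Ideal.map (φ : A →+* A) I = I)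
    (α : A) (hα : IsUnit α) (hφf : φ f = α * f) :
    letI K := FractionRing A
    letI A' : Subalgebra A K :=
      Algebra.adjoin A ((fun a => algebraMap A K a / algebraMap A K f) '' (I : Set A))
    ∃! φ' : A' ≃+* A',
      ∀ a : A,
        φ' ⟨algebraMap A K a, Subalgebra.algebraMap_mem _ a⟩ =
          ⟨algebraMap A K (φ a), Subalgebra.algebraMap_mem _ (φ a)⟩ := by
  let K := FractionRing A
  let A' : Subalgebra A K :=
    Algebra.adjoin A ((fun a => algebraMap A K a / algebraMap A K f) '' (I : Set A))
  have hI1 : ∀ a ∈ I, φ a ∈ I := fun a ha => by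
    have := Ideal.mem_map_of_mem (φ : A →+* A) ha
    rwa [hφI] at this
  have hI2 : ∀ a ∈ I, φ.symm a ∈ I := fun a ha => by
    rw [← hφI] at ha
    obtain ⟨b, hb, rfl⟩ := (Ideal.mem_map_iff_of_surjective (φ : A →+* A) φ.surjective).1 ha
    simpa using hb
  obtain ⟨β, hβ⟩ := hα.exists_left_inv
  have hβu : IsUnit (φ.symm β) := (IsUnit.of_mul_eq_one α hβ).map φ.symm
  have hsf : φ.symm f = φ.symm β * f := by
    apply φ.injective
    rw [map_mul, φ.apply_symm_apply, φ.apply_symm_apply, hφf, ← mul_assoc, hβ, one_mul]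
  let Φ : K ≃+* K := IsFractionRing.ringEquivOfRingEquiv φ
  have hΦ : ∀ a, Φ (algebraMap A K a) = algebraMap A K (φ a) := fun a =>
    IsFractionRing.ringEquivOfRingEquiv_algebraMap φ a
  have hΦs : ∀ a, Φ.symm (algebraMap A K a) = algebraMap A K (φ.symm a) := fun a => by
    rw [RingEquiv.symm_apply_eq, hΦ, φ.apply_symm_apply]
  have h1 : ∀ x ∈ A', Φ x ∈ A' := aux_mem I f hf0 φ hI1 α hα hφf Φ hΦ
  have h2 : ∀ x ∈ A', Φ.symm x ∈ A' := aux_mem I f hf0 φ.symm hI2 _ hβu hsf Φ.symm hΦs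
  let φ' : A' ≃+* A' :=
    { toFun := fun x => ⟨Φ x, h1 x x.2⟩
      invFun := fun x => ⟨Φ.symm x, h2 x x.2⟩
      left_inv := fun x => Subtype.ext (Φ.symm_apply_apply x)
      right_inv := fun x => Subtype.ext (Φ.apply_symm_apply x)
      map_mul' := fun x y => Subtype.ext (map_mul Φ (x : K) y)
      map_add' := fun x y => Subtype.ext (map_add Φ (x : K) y) }
  refine ⟨φ', fun a => Subtype.ext (hΦ a), ?_⟩
  intro ψ hψ
  ext x
  change ((ψ x : A') : K) = Φ x
  obtain ⟨a, b, hb, hab⟩ := IsFractionRing.div_surjective (A := A) (x : K)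
  have hb0 : b ≠ 0 := nonZeroDivisors.ne_zero hb
  have hbK : algebraMap A K b ≠ 0 := by simpa [K] using hb0
  have hbK' : algebraMap A K (φ b) ≠ 0 := by simpa [K] using hb0
  have hmul : (⟨algebraMap A K b, Subalgebra.algebraMap_mem _ b⟩ : A') * x
      = ⟨algebraMap A K a, Subalgebra.algebraMap_mem _ a⟩ := by
    apply Subtype.ext
    change algebraMap A K b * (x : K) = algebraMap A K a
    rw [← hab, mul_div_cancel₀ _ hbK]
  have h3 := congrArg (fun y : A' => (y : K)) (congrArg ψ hmul)
  simp only [map_mul] at h3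
  rw [hψ, hψ] at h3
  change algebraMap A K (φ b) * ((ψ x : A') : K) = algebraMap A K (φ a) at h3
  rw [← hab, map_div₀, hΦ, hΦ, eq_div_iff hbK', mul_comm, h3]
end
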